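/- arXiv:2509.14073 — 4 statements merged into one kernel-verified Lean document; each statement's English description precedes it below -/
import Mathlib

section
/- For τ > 0 define Q(τ) := (8τ / (√3 · η(2iτ))) · f(τ), where f(τ) := Σ_{n=1}^∞ (−1)^{n−1} n sin(2πn/3) exp(−(2π/3) n² τ) and η(2iτ) := e^{−πτ/6} ∏_{n=1}^∞ (1 − e^{−4πnτ}). Then, as τ → ∞, Q(τ) = 4τ e^{−πτ/2} + 8τ e^{−5πτ/2} + O(τ e^{−9πτ/2}); that is, there exist constants C > 0 and τ₀ > 0 such that |Q(τ) − 4τ e^{−πτ/2} − 8τ e^{−5πτ/2}| ≤ C τ e^{−9πτ/2} for all τ ≥ τ₀. -/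
open Real Filter

/-- `f τ = Σ_{n=1}^∞ (−1)^{n−1} n sin(2πn/3) exp(−(2π/3) n² τ)`. The `n = 0` term vanishes,
and for `n ≥ 1` one has `(−1)^{n+1} = (−1)^{n−1}`. -/
noncomputable def f (τ : ℝ) : ℝ :=
  ∑' n : ℕ, (-1 : ℝ) ^ (n + 1) * n * Real.sin (2 * π * n / 3) * Real.exp (-(2 * π / 3) * n ^ 2 * τ)

/-- The Dedekind eta function `η(2iτ) = e^{−πτ/6} ∏_{n=1}^∞ (1 − e^{−4πnτ})`. -/
noncomputable def dedekindEta (τ : ℝ) : ℝ :=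
  Real.exp (-π * τ / 6) * ∏' n : ℕ, (1 - Real.exp (-4 * π * (n + 1) * τ))

/-- `Q(τ) = (8τ / (√3 η(2iτ))) f(τ)`. -/
noncomputable def Q (τ : ℝ) : ℝ := 8 * τ / (Real.sqrt 3 * dedekindEta τ) * f τ

/-- As `τ → ∞`, `Q(τ) = 4τ e^{−πτ/2} + 8τ e^{−5πτ/2} + O(τ e^{−9πτ/2})`. -/
theorem one_sub_sum_le_prod_one_sub {ι : Type*} (s : Finset ι) (a : ι → ℝ)
    (h0 : ∀ i, 0 ≤ a i) (h1 : ∀ i, a i ≤ 1) : 1 - ∑ i ∈ s, a i ≤ ∏ i ∈ s, (1 - a i) := by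
  classical
  induction s using Finset.induction_on with
  | empty => simp
  | insert i s hi ih =>
    rw [Finset.sum_insert hi, Finset.prod_insert hi]
    have hle : ∏ j ∈ s, (1 - a j) ≤ 1 :=
      Finset.prod_le_one (fun j _ ↦ sub_nonneg.2 (h1 j)) (fun j _ ↦ by linarith [h0 j])
    nlinarith [h0 i, h1 i]

/-- Bounds on the Euler product `∏ (1 - x ^ (n + 1))` for small `x`. -/
theorem tprod_one_sub_pow_mem_Icc {x : ℝ} (hx0 : 0 ≤ x) (hx : x ≤ 1 / 2) :
    ∏' n : ℕ, (1 - x ^ (n + 1)) ∈ Set.Icc (1 - 2 * x) 1 := by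
  have hx1 : x < 1 := by linarith
  have hsum : HasSum (fun n : ℕ ↦ x ^ (n + 1)) (x * (1 - x)⁻¹) := by
    simpa only [pow_succ'] using (hasSum_geometric_of_lt_one hx0 hx1).mul_left x
  have hmul : Multipliable fun n : ℕ ↦ 1 - x ^ (n + 1) := by
    simpa only [sub_eq_add_neg] using Real.multipliable_one_add_of_summable hsum.summable.neg
  have h0 (n : ℕ) : 0 ≤ x ^ (n + 1) := by positivity
  have h1 (n : ℕ) : x ^ (n + 1) ≤ 1 := pow_le_one₀ hx0 hx1.le
  have hinv : (1 - x)⁻¹ ≤ 2 := inv_le_of_inv_le₀ two_pos (by linarith)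
  constructor
  · refine le_hasProd_of_le_prod hmul.hasProd fun s ↦ ?_
    have hs := sum_le_hasSum s (fun n _ ↦ h0 n) hsum
    have := one_sub_sum_le_prod_one_sub s (fun n ↦ x ^ (n + 1)) h0 h1
    nlinarith
  · exact hasProd_le_of_prod_le hmul.hasProd fun s ↦
      Finset.prod_le_one (fun n _ ↦ sub_nonneg.2 (h1 n)) (fun n _ ↦ by linarith [h0 n])

theorem dedekindEta_eq (τ : ℝ) :
    dedekindEta τ
      = Real.exp (-π * τ / 6) * ∏' n : ℕ, (1 - Real.exp (-4 * π * τ) ^ (n + 1)) := by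
  unfold dedekindEta
  congr 2
  ext n
  rw [← Real.exp_nat_mul]
  congr 2
  push_cast
  ring

theorem sin_two_pi_div_three : Real.sin (2 * π / 3) = √3 / 2 := by
  rw [← Real.sin_pi_div_three, ← Real.sin_pi_sub (π / 3)]
  congr 1
  ring

theorem sin_four_pi_div_three : Real.sin (4 * π / 3) = -(√3 / 2) := by
  rw [← Real.sin_pi_div_three, ← Real.sin_add_pi]
  congr 1
  ring

theorem abs_f_term_add_three_le {τ : ℝ} (hτ : 1 ≤ τ) (n : ℕ) :
    |(-1 : ℝ) ^ (n + 3 + 1) * ((n + 3 : ℕ) : ℝ) * Real.sin (2 * π * ((n + 3 : ℕ) : ℝ) / 3)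
        * Real.exp (-(2 * π / 3) * ((n + 3 : ℕ) : ℝ) ^ 2 * τ)|
      ≤ Real.exp (-6 * π * τ) * ((n + 3) * Real.exp (-1) ^ n) := by
  rw [abs_mul, abs_mul, abs_mul, abs_pow, abs_neg, abs_one, one_pow, one_mul, Real.abs_exp,
    Nat.abs_cast, ← Real.exp_nat_mul]
  have hexp : Real.exp (-(2 * π / 3) * ((n + 3 : ℕ) : ℝ) ^ 2 * τ)
      ≤ Real.exp (-6 * π * τ) * Real.exp (n * -1) := by
    rw [← Real.exp_add, Real.exp_le_exp]
    push_cast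
    have hn : (0 : ℝ) ≤ n := n.cast_nonneg
    have hπτ : 1 ≤ 2 * π / 3 * τ := by nlinarith [Real.pi_gt_three]
    nlinarith [mul_nonneg hn hn, mul_nonneg hn (sub_nonneg.2 hπτ),
      mul_nonneg (mul_nonneg hn hn) (sub_nonneg.2 hπτ)]
  calc _ ≤ ((n + 3 : ℕ) : ℝ) * 1 * (Real.exp (-6 * π * τ) * Real.exp (n * -1)) := by
        gcongr
        exact Real.abs_sin_le_one _
    _ = _ := by push_cast; ring

theorem summable_add_three_mul_exp_neg_one_pow :
    Summable fun n : ℕ ↦ ((n : ℝ) + 3) * Real.exp (-1) ^ n := by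
  have hr : ‖Real.exp (-1)‖ < 1 := by simp
  have h1 := summable_pow_mul_geometric_of_norm_lt_one 1 hr
  have h2 := (summable_geometric_of_norm_lt_one hr).mul_left 3
  simpa [add_mul] using h1.add h2

theorem abs_f_sub_le {τ : ℝ} (hτ : 1 ≤ τ) :
    |f τ - √3 / 2 * (Real.exp (-(2 * π / 3) * τ) + 2 * Real.exp (-(8 * π / 3) * τ))|
      ≤ Real.exp (-6 * π * τ) * ∑' n : ℕ, ((n : ℝ) + 3) * Real.exp (-1) ^ n := by
  have hB := summable_add_three_mul_exp_neg_one_pow.hasSum.mul_left (Real.exp (-6 * π * τ))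
  have hbound := abs_f_term_add_three_le hτ
  simp only [← Real.norm_eq_abs] at hbound
  have htail := hB.summable.of_norm_bounded hbound
  have hsplit := htail.sum_add_tsum_nat_add' (f := fun n : ℕ ↦ (-1 : ℝ) ^ (n + 1) * n
    * Real.sin (2 * π * n / 3) * Real.exp (-(2 * π / 3) * n ^ 2 * τ))
  have hhead : ∑ n ∈ Finset.range 3, (-1 : ℝ) ^ (n + 1) * n
      * Real.sin (2 * π * n / 3) * Real.exp (-(2 * π / 3) * n ^ 2 * τ)
      = √3 / 2 * (Real.exp (-(2 * π / 3) * τ) + 2 * Real.exp (-(8 * π / 3) * τ)) := by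
    have h4 : 2 * π * 2 / 3 = 4 * π / 3 := by ring
    have h8 : -(2 * π / 3) * 2 ^ 2 * τ = -(8 * π / 3) * τ := by ring
    simp only [Finset.sum_range_succ, Finset.sum_range_zero, Nat.cast_zero, Nat.cast_one,
      Nat.cast_ofNat, mul_one, one_pow, h4, h8, sin_two_pi_div_three, sin_four_pi_div_three]
    ring
  unfold f
  rw [← hsplit, hhead, add_sub_cancel_left]
  exact tsum_of_norm_bounded hB hbound

/-- As `τ → ∞`, `Q(τ) = 4τ e^{−πτ/2} + 8τ e^{−5πτ/2} + O(τ e^{−9πτ/2})`. -/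
theorem Q_asymptotic_expansion :
    ∃ C > (0 : ℝ), ∃ τ₀ > (0 : ℝ), ∀ τ : ℝ, τ₀ ≤ τ →
      |Q τ - 4 * τ * Real.exp (-π * τ / 2) - 8 * τ * Real.exp (-5 * π * τ / 2)|
        ≤ C * τ * Real.exp (-9 * π * τ / 2) := by
  set B : ℝ := ∑' n : ℕ, ((n : ℝ) + 3) * Real.exp (-1) ^ n
  have hB : 0 ≤ B := tsum_nonneg fun n ↦ by positivity
  refine ⟨48 + 16 * B, by positivity, 1, one_pos, fun τ hτ ↦ ?_⟩
  have hτ0 : 0 < τ := by linarith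
  have hπτ : 3 < π * τ := by nlinarith [Real.pi_gt_three]
  set x := Real.exp (-4 * π * τ) with hx
  set y := Real.exp (-π * τ / 2) with hy
  set z := Real.exp (-9 * π * τ / 2) with hz
  have hx0 : 0 < x := Real.exp_pos _
  have hx4 : x ≤ 1 / 4 := by
    have h : x * Real.exp (4 * π * τ) = 1 := by
      rw [hx, ← Real.exp_add, ← Real.exp_zero]
      congr 1
      ring
    nlinarith [Real.add_one_le_exp (4 * π * τ)]
  have hyx : y * x = z := by
    rw [hx, hy, hz, ← Real.exp_add]
    congr 1
    ring
  obtain ⟨hP1, hP2⟩ := tprod_one_sub_pow_mem_Icc hx0.le (by linarith)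
  have hη := dedekindEta_eq τ
  rw [← hx] at hη
  set P := ∏' n : ℕ, (1 - x ^ (n + 1))
  have hP0 : 0 < P := by linarith
  set w := Real.exp (-5 * π * τ / 2) with hw
  set E := Real.exp (-π * τ / 6) with hE
  have hE0 : 0 < E := Real.exp_pos _
  have hf := abs_f_sub_le hτ
  have h2 : Real.exp (-(2 * π / 3) * τ) = E * y := by
    rw [hE, hy, ← Real.exp_add]
    congr 1
    ring
  have h8 : Real.exp (-(8 * π / 3) * τ) = E * w := by
    rw [hE, hw, ← Real.exp_add]
    congr 1
    ring
  have h6 : Real.exp (-6 * π * τ) ≤ E * z := by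
    rw [hE, hz, ← Real.exp_add, Real.exp_le_exp]
    nlinarith
  have hwy : w ≤ y := Real.exp_le_exp.2 (by nlinarith)
  have hw0 : 0 < w := Real.exp_pos _
  have hz0 : 0 < z := Real.exp_pos _
  have hs : 1 ≤ √3 := Real.one_le_sqrt.2 (by norm_num)
  rw [h2, h8] at hf
  set R := f τ - √3 / 2 * (E * y + 2 * (E * w)) with hR
  have hRz : |R| ≤ E * z * B := hf.trans (by gcongr)
  have hQ : Q τ - 4 * τ * y - 8 * τ * w
      = (4 * τ * ((y + 2 * w) * (1 - P)) + 8 * τ * (R / (√3 * E))) / P := by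
    have hfR : f τ = R + √3 / 2 * (E * y + 2 * (E * w)) := by rw [hR]; ring
    rw [Q, hη, hfR]
    field_simp
    ring
  have hmain : (y + 2 * w) * (1 - P) ≤ 6 * z := by
    calc (y + 2 * w) * (1 - P) ≤ (3 * y) * (2 * x) := by
          gcongr <;> linarith
      _ = 6 * z := by rw [← hyx]; ring
  have hRE : |R / (√3 * E)| ≤ B * z := by
    rw [abs_div, abs_of_pos (by positivity : 0 < √3 * E), div_le_iff₀ (by positivity)]
    nlinarith [mul_nonneg (mul_nonneg (mul_nonneg hB hz0.le) hE0.le) (sub_nonneg.2 hs)]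
  have hnonneg : 0 ≤ (y + 2 * w) * (1 - P) := by
    have : 0 < y := Real.exp_pos _
    have := sub_nonneg.2 hP2
    positivity
  rw [hQ, abs_div, abs_of_pos hP0, div_le_iff₀ hP0]
  calc _ ≤ |4 * τ * ((y + 2 * w) * (1 - P))| + |8 * τ * (R / (√3 * E))| := abs_add_le _ _
    _ = 4 * τ * ((y + 2 * w) * (1 - P)) + 8 * τ * |R / (√3 * E)| := by
        rw [abs_of_nonneg (by positivity), abs_mul, abs_of_pos (by positivity : 0 < 8 * τ)]
    _ ≤ 4 * τ * (6 * z) + 8 * τ * (B * z) := by gcongr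
    _ = (48 + 16 * B) * τ * z * (1 / 2) := by ring
    _ ≤ (48 + 16 * B) * τ * z * P := by
        gcongr
        linarith
end

section
/- With f(τ) := Σ_{n=1}^∞ (−1)^{n−1} n sin(2πn/3) exp(−(2π/3) n² τ) for τ > 0, one has lim_{τ→0⁺} τ^{3/2} e^{π/(24τ)} f(τ) = √6/16. -/
open Real Filter Set

/-- For a nonzero integer `n` and `|a| < 1/2`, the point `n + a` is farther from `0` than `a`. -/
theorem sq_lt_intCast_add_sq {a : ℝ} (ha : |a| < 1 / 2) {n : ℤ} (hn : n ≠ 0) :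
    a ^ 2 < (n + a) ^ 2 := by
  rw [sq_lt_sq]
  have h1 : (1 : ℝ) ≤ |(n : ℝ)| := mod_cast Int.one_le_abs hn
  have h2 := abs_sub_abs_le_abs_sub (n : ℝ) (-a)
  rw [abs_neg, sub_neg_eq_add] at h2
  linarith

/-- For `|a| < 1/2`, the odd Hurwitz kernel is asymptotic to its `n = 0` term at infinity. -/
theorem tendsto_exp_mul_oddKernel_atTop {a : ℝ} (ha : |a| < 1 / 2) :
    Tendsto (fun x : ℝ => Real.exp (π * a ^ 2 * x) * HurwitzZeta.oddKernel a x)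
      atTop (nhds a) := by
  have hdom : Tendsto
      (fun x : ℝ => ∑' n : ℤ, (n + a) * Real.exp (-(π * ((n + a) ^ 2 - a ^ 2)) * x)) atTop
      (nhds (∑' n : ℤ, if n = 0 then a else 0)) := by
    refine tendsto_tsum_of_dominated_convergence
      (bound := fun n : ℤ =>
        Real.exp (π * a ^ 2) * ‖(n + a) * Real.exp (-π * (n + a) ^ 2 * 1)‖)
      ((HurwitzZeta.hasSum_int_oddKernel a one_pos).summable.norm.mul_left _) ?_ ?_
    · intro n
      split_ifs with hn
      · simp [hn]
      · have hc : 0 < π * ((n + a) ^ 2 - a ^ 2) :=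
          mul_pos pi_pos (sub_pos.2 (sq_lt_intCast_add_sq ha hn))
        rw [← mul_zero ((n : ℝ) + a)]
        refine Tendsto.const_mul _ (Real.tendsto_exp_atBot.comp ?_)
        exact tendsto_id.const_mul_atTop_of_neg (neg_neg_of_pos hc)
    · filter_upwards [eventually_ge_atTop 1] with x hx n
      have hc : 0 ≤ π * ((n + a) ^ 2 - a ^ 2) := by
        refine mul_nonneg pi_pos.le (sub_nonneg.2 ?_)
        rcases eq_or_ne n 0 with rfl | hn
        · simp
        · exact (sq_lt_intCast_add_sq ha hn).le
      rw [norm_mul, norm_mul, mul_left_comm, Real.norm_of_nonneg (Real.exp_pos _).le,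
        Real.norm_of_nonneg (Real.exp_pos _).le, ← Real.exp_add]
      gcongr
      nlinarith
  rw [tsum_ite_eq] at hdom
  refine hdom.congr' ?_
  filter_upwards [eventually_gt_atTop 0] with x hx
  rw [← (HurwitzZeta.hasSum_int_oddKernel a hx).tsum_eq, ← tsum_mul_left]
  refine tsum_congr fun n => ?_
  rw [mul_left_comm, ← Real.exp_add]
  ring_nf

theorem neg_one_pow_succ_mul_sin (n : ℕ) :
    (-1 : ℝ) ^ (n + 1) * Real.sin (2 * π * n / 3) = Real.sin (2 * π * (1 / 6) * n) := by
  have h : 2 * π * (1 / 6) * n = n * π - 2 * π * n / 3 := by ring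
  rw [h, Real.sin_nat_mul_pi_sub]
  ring

theorem f_eq_sinKernel {τ : ℝ} (hτ : 0 < τ) :
    f τ = HurwitzZeta.sinKernel ((1 / 6 : ℝ) : UnitAddCircle) (2 * τ / 3) / 2 := by
  rw [f, ← (HurwitzZeta.hasSum_nat_sinKernel (1 / 6) (by positivity)).tsum_eq, ← tsum_div_const]
  refine tsum_congr fun n => ?_
  rw [← neg_one_pow_succ_mul_sin]
  ring_nf

theorem f_eq_oddKernel {τ : ℝ} (hτ : 0 < τ) :
    f τ = (3 / 2 / τ) ^ (3 / 2 : ℝ) / 2 *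
      HurwitzZeta.oddKernel ((1 / 6 : ℝ) : UnitAddCircle) (3 / 2 / τ) := by
  have hx : 0 < (3 / 2 / τ) ^ (3 / 2 : ℝ) := by positivity
  have hinv : 1 / (3 / 2 / τ) = 2 * τ / 3 := by field_simp
  rw [HurwitzZeta.oddKernel_functional_equation, hinv, f_eq_sinKernel hτ]
  field_simp

/-- Small-`τ` asymptotics of `f`: `lim_{τ→0⁺} τ^{3/2} e^{π/(24τ)} f(τ) = √6/16`. -/
theorem f_small_tau_asymptotics :
    Tendsto (fun τ : ℝ => τ ^ ((3 : ℝ) / 2) * Real.exp (π / (24 * τ)) * f τ)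
      (nhdsWithin 0 (Ioi 0)) (nhds (Real.sqrt 6 / 16)) := by
  have hx : Tendsto (fun τ : ℝ => 3 / 2 / τ) (nhdsWithin 0 (Ioi 0)) atTop := by
    simpa only [div_eq_mul_inv] using
      tendsto_inv_nhdsGT_zero.const_mul_atTop (by norm_num : (0 : ℝ) < 3 / 2)
  have ha : |(1 / 6 : ℝ)| < 1 / 2 := by rw [abs_of_pos] <;> norm_num
  have hlim := ((tendsto_exp_mul_oddKernel_atTop ha).comp hx).const_mul
    ((3 / 2 : ℝ) ^ (3 / 2 : ℝ) / 2)
  have hval : (3 / 2 : ℝ) ^ (3 / 2 : ℝ) / 2 * (1 / 6) = Real.sqrt 6 / 16 := by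
    have h6 : Real.sqrt 6 = 2 * Real.sqrt (3 / 2) := by
      rw [show (6 : ℝ) = 2 ^ 2 * (3 / 2) by norm_num, Real.sqrt_mul (by norm_num),
        Real.sqrt_sq (by norm_num)]
    have hpow : (3 / 2 : ℝ) ^ (3 / 2 : ℝ) = 3 / 2 * Real.sqrt (3 / 2) := by
      rw [Real.sqrt_eq_rpow, ← Real.rpow_one_add' (by norm_num) (by norm_num)]
      norm_num
    rw [h6, hpow]
    ring
  rw [hval] at hlim
  refine hlim.congr' ?_
  filter_upwards [self_mem_nhdsWithin] with τ hτ
  have hτ : 0 < τ := hτ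
  have hpow : 0 < τ ^ (3 / 2 : ℝ) := by positivity
  have hexp : π * (1 / 6) ^ 2 * (3 / 2 / τ) = π / (24 * τ) := by
    field_simp
    norm_num
  rw [Function.comp_apply, hexp, f_eq_oddKernel hτ, Real.div_rpow (by norm_num) hτ.le]
  field_simp
end

section
/- For every real x ≠ 0, with f(τ) := Σ_{n=1}^∞ (−1)^{n−1} n sin(2πn/3) exp(−(2π/3) n² τ), the function τ ↦ e^{−(2π/3) τ x²} f(τ) is integrable on (0, ∞) and ∫₀^∞ e^{−(2π/3) τ x²} f(τ) dτ = (3/4) · sinh(2πx/3) / sinh(πx). -/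
open Real MeasureTheory Set

lemma integrable_tsum_of_summable_integral_norm {α ι : Type*} [MeasurableSpace α] {μ : Measure α}
    [Countable ι] {F : ι → α → ℝ} (hF_int : ∀ i, Integrable (F i) μ)
    (hF_sum : Summable fun i => ∫ a, ‖F i a‖ ∂μ) : Integrable (fun a => ∑' i, F i a) μ := by
  refine ⟨(AEMeasurable.tsum fun i => (hF_int i).aemeasurable).aestronglyMeasurable, ?_⟩
  calc ∫⁻ a, ‖∑' i, F i a‖ₑ ∂μ ≤ ∫⁻ a, ∑' i, ‖F i a‖ₑ ∂μ :=
        lintegral_mono fun a => enorm_tsum_le_tsum_enorm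
    _ = ∑' i, ENNReal.ofReal (∫ a, ‖F i a‖ ∂μ) := by
        rw [lintegral_tsum fun i => (hF_int i).1.enorm]
        exact tsum_congr fun i => (ofReal_integral_norm_eq_lintegral_enorm (hF_int i)).symm
    _ < ⊤ := hF_sum.tsum_ofReal_lt_top

/-- The integrand `n e^{-c(n² + x²)τ}`, whose integral over `(0, ∞)` is `n / (c(n² + x²))`. -/
noncomputable def gaussTerm (c x n τ : ℝ) : ℝ := n * Real.exp (-(c * (n ^ 2 + x ^ 2)) * τ)

lemma integrableOn_gaussTerm {c n : ℝ} (x : ℝ) (hc : 0 < c) (hn : 0 < n) :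
    IntegrableOn (gaussTerm c x n) (Ioi 0) :=
  (integrableOn_exp_mul_Ioi (neg_lt_zero.2 (by positivity)) 0).const_mul n

lemma integral_gaussTerm {c n : ℝ} (x : ℝ) (hc : 0 < c) (hn : 0 < n) :
    ∫ τ in Ioi (0 : ℝ), gaussTerm c x n τ = n / (n ^ 2 + x ^ 2) / c := by
  simp only [gaussTerm]
  rw [integral_const_mul, integral_exp_mul_Ioi (neg_lt_zero.2 (by positivity))]
  have : n ^ 2 + x ^ 2 ≠ 0 := by positivity
  simp only [mul_zero, Real.exp_zero]
  field_simp

lemma integral_norm_gaussTerm_sub_le {c p q : ℝ} (x : ℝ) (hc : 0 < c) (hp : 0 < p) (hpq : p ≤ q) :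
    ∫ τ in Ioi (0 : ℝ), ‖gaussTerm c x q τ - gaussTerm c x p τ‖ ≤ 3 * (q - p) / p ^ 2 / c := by
  have hq : 0 < q := hp.trans_le hpq
  have hiq := integrableOn_gaussTerm x hc hq
  have hip := integrableOn_gaussTerm x hc hp
  have hbound : ∀ τ ∈ Ioi (0 : ℝ), ‖gaussTerm c x q τ - gaussTerm c x p τ‖ ≤
      (1 - 2 * p / q) * gaussTerm c x q τ + gaussTerm c x p τ := by
    intro τ hτ
    have hτ : 0 < τ := hτ
    have hexp : Real.exp (-(c * (q ^ 2 + x ^ 2)) * τ) ≤ Real.exp (-(c * (p ^ 2 + x ^ 2)) * τ) := by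
      rw [Real.exp_le_exp]
      have : c * (p ^ 2 + x ^ 2) * τ ≤ c * (q ^ 2 + x ^ 2) * τ := by gcongr
      linarith
    have hpos := Real.exp_pos (-(c * (q ^ 2 + x ^ 2)) * τ)
    have hcancel : (1 - 2 * p / q) * gaussTerm c x q τ =
        (q - 2 * p) * Real.exp (-(c * (q ^ 2 + x ^ 2)) * τ) := by
      simp only [gaussTerm]; field_simp
    rw [hcancel, Real.norm_eq_abs, abs_le]
    simp only [gaussTerm]
    constructor <;> nlinarith
  have hle := setIntegral_mono_on (hiq.sub hip).norm ((hiq.const_mul _).add hip)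
    measurableSet_Ioi hbound
  refine hle.trans ?_
  simp only [Pi.add_apply]
  rw [integral_add (hiq.const_mul _) hip, integral_const_mul, integral_gaussTerm x hc hq,
    integral_gaussTerm x hc hp, mul_div_assoc', ← add_div]
  gcongr
  have hp' : 0 < p ^ 2 + x ^ 2 := by positivity
  have hq' : 0 < q ^ 2 + x ^ 2 := by positivity
  have hsplit : (1 - 2 * p / q) * (q / (q ^ 2 + x ^ 2)) + p / (p ^ 2 + x ^ 2) =
      (q - p) / (q ^ 2 + x ^ 2) +
        (q - p) * (p * (q + p) / (q ^ 2 + x ^ 2)) / (p ^ 2 + x ^ 2) := by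
    field_simp; ring
  have h₁ : (q - p) / (q ^ 2 + x ^ 2) ≤ (q - p) / p ^ 2 := by
    have : 0 ≤ q - p := sub_nonneg.2 hpq
    gcongr
    nlinarith [sq_nonneg x]
  have h₂ : (q - p) * (p * (q + p) / (q ^ 2 + x ^ 2)) / (p ^ 2 + x ^ 2) ≤ (q - p) * 2 / p ^ 2 := by
    have : 0 ≤ q - p := sub_nonneg.2 hpq
    gcongr
    · rw [div_le_iff₀ hq']
      nlinarith [sq_nonneg x]
    · nlinarith [sq_nonneg x]
  calc _ ≤ (q - p) / p ^ 2 + (q - p) * 2 / p ^ 2 := hsplit ▸ add_le_add h₁ h₂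
    _ = _ := by ring

lemma mul_add_one_sub_pos {N j : ℝ} (hj : 0 < j) (hjN : j < N) (k : ℕ) :
    0 < N * (k + 1) - j := by
  have : 0 ≤ N * (k : ℝ) := mul_nonneg (hj.trans hjN).le k.cast_nonneg
  linarith

lemma integrableOn_gaussTerm_sub {c N j : ℝ} (x : ℝ) (hc : 0 < c) (hj : 0 < j) (hjN : j < N)
    (k : ℕ) : IntegrableOn (fun τ => gaussTerm c x (N * (k + 1) + j) τ -
      gaussTerm c x (N * (k + 1) - j) τ) (Ioi 0) := by
  have := mul_add_one_sub_pos hj hjN k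
  exact (integrableOn_gaussTerm x hc (by linarith)).sub (integrableOn_gaussTerm x hc this)

lemma summable_integral_norm_gaussTerm_sub {c N j : ℝ} (x : ℝ) (hc : 0 < c) (hj : 0 < j)
    (hjN : j < N) :
    Summable fun k : ℕ => ∫ τ in Ioi (0 : ℝ),
      ‖gaussTerm c x (N * (k + 1) + j) τ - gaussTerm c x (N * (k + 1) - j) τ‖ := by
  have hNj : 0 < N - j := sub_pos.2 hjN
  have hle (k : ℕ) : (N - j) * (k + 1) ≤ N * (k + 1) - j := by
    have : 0 ≤ j * (k : ℝ) := by positivity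
    linarith
  have hsum : Summable fun k : ℕ => 6 * j / (N - j) ^ 2 / c * (1 / ((k + 1 : ℕ) : ℝ) ^ 2) :=
    ((summable_nat_add_iff 1).2 (Real.summable_one_div_nat_pow.2 one_lt_two)).mul_left _
  refine hsum.of_nonneg_of_le (fun k => integral_nonneg fun τ => norm_nonneg _) fun k => ?_
  refine (integral_norm_gaussTerm_sub_le x hc (mul_add_one_sub_pos hj hjN k)
    (by linarith)).trans ?_
  calc 3 * (N * (k + 1) + j - (N * (k + 1) - j)) / (N * (k + 1) - j) ^ 2 / c
      = 6 * j / (N * (k + 1) - j) ^ 2 / c := by ring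
    _ ≤ 6 * j / ((N - j) * (k + 1)) ^ 2 / c := by
      gcongr
      exact hle k
    _ = _ := by push_cast; field_simp

lemma integral_tsum_gaussTerm_sub {c N j : ℝ} (x : ℝ) (hc : 0 < c) (hj : 0 < j) (hjN : j < N) :
    ∫ τ in Ioi (0 : ℝ), ∑' k : ℕ,
        (gaussTerm c x (N * (k + 1) + j) τ - gaussTerm c x (N * (k + 1) - j) τ) =
      (∑' k : ℕ, ((N * (k + 1) + j) / ((N * (k + 1) + j) ^ 2 + x ^ 2) -
        (N * (k + 1) - j) / ((N * (k + 1) - j) ^ 2 + x ^ 2))) / c := by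
  rw [← integral_tsum_of_summable_integral_norm (integrableOn_gaussTerm_sub x hc hj hjN)
    (summable_integral_norm_gaussTerm_sub x hc hj hjN), ← tsum_div_const]
  refine tsum_congr fun k => ?_
  have hp := mul_add_one_sub_pos hj hjN k
  have hq : 0 < N * (k + 1) + j := by linarith
  rw [integral_sub (integrableOn_gaussTerm x hc hq) (integrableOn_gaussTerm x hc hp),
    integral_gaussTerm x hc hp, integral_gaussTerm x hc hq]
  ring

lemma re_one_div_add_mul_I (n x : ℝ) : (1 / ((n : ℂ) + x * Complex.I)).re = n / (n ^ 2 + x ^ 2) := by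
  simp [Complex.inv_re, Complex.normSq_apply, sq]

lemma re_cot_add_mul_I (a b : ℝ) (h : Real.sin a ≠ 0) :
    (Complex.cot (a + b * Complex.I)).re =
      Real.sin (2 * a) / (Real.cosh (2 * b) - Real.cos (2 * a)) := by
  have hpos : 0 < Real.sin a ^ 2 + Real.sinh b ^ 2 := by positivity
  have hden : Real.cosh (2 * b) - Real.cos (2 * a) =
      2 * (Real.sin a ^ 2 + Real.sinh b ^ 2) := by
    rw [Real.cosh_two_mul, Real.cos_two_mul]
    linarith [Real.cosh_sq b, Real.sin_sq_add_cos_sq a]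
  have hsin : Complex.sin (a + b * Complex.I) =
      ⟨Real.sin a * Real.cosh b, Real.cos a * Real.sinh b⟩ := by
    rw [Complex.sin_add_mul_I, ← Complex.ofReal_sin, ← Complex.ofReal_cos, ← Complex.ofReal_sinh,
      ← Complex.ofReal_cosh, Complex.mk_eq_add_mul_I]
    push_cast; ring
  have hcos : Complex.cos (a + b * Complex.I) =
      ⟨Real.cos a * Real.cosh b, -(Real.sin a * Real.sinh b)⟩ := by
    rw [Complex.cos_add_mul_I, ← Complex.ofReal_sin, ← Complex.ofReal_cos, ← Complex.ofReal_sinh,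
      ← Complex.ofReal_cosh, Complex.mk_eq_add_mul_I]
    push_cast; ring
  have hnorm : Real.sin a * Real.cosh b * (Real.sin a * Real.cosh b) +
      Real.cos a * Real.sinh b * (Real.cos a * Real.sinh b) =
      Real.sin a ^ 2 + Real.sinh b ^ 2 := by
    linear_combination Real.sin a ^ 2 * Real.cosh_sq b +
      Real.sinh b ^ 2 * Real.sin_sq_add_cos_sq a
  rw [Complex.cot, hsin, hcos, Complex.div_re, Complex.normSq_mk, hnorm, hden, Real.sin_two_mul]
  field_simp
  linear_combination Real.cos a * Real.cosh_sq b

lemma add_tsum_eq_cosh_sub_cos {N j x : ℝ} (hx : x ≠ 0) (hj : 0 < j) (hjN : j < N) :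
    j / (j ^ 2 + x ^ 2) + ∑' k : ℕ, ((N * (k + 1) + j) / ((N * (k + 1) + j) ^ 2 + x ^ 2) -
        (N * (k + 1) - j) / ((N * (k + 1) - j) ^ 2 + x ^ 2)) =
      π / N * (Real.sin (2 * π * j / N) /
        (Real.cosh (2 * π * x / N) - Real.cos (2 * π * j / N))) := by
  have hN : 0 < N := hj.trans hjN
  have hNC : (N : ℂ) ≠ 0 := by exact_mod_cast hN.ne'
  set z : ℂ := (j + x * Complex.I) / N with hz
  have hzim : z.im = x / N := by simp [hz]
  have hzmem : z ∈ Complex.integerComplement := by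
    rintro ⟨n, hn⟩
    have him := congrArg Complex.im hn
    rw [hzim, Complex.intCast_im] at him
    exact div_ne_zero hx hN.ne' him.symm
  have hterm (k : ℕ) : (1 / (z - (k + 1)) + 1 / (z + (k + 1))).re =
      N * ((N * (k + 1) + j) / ((N * (k + 1) + j) ^ 2 + x ^ 2) -
        (N * (k + 1) - j) / ((N * (k + 1) - j) ^ 2 + x ^ 2)) := by
    have h₁ : 1 / (z + (k + 1)) =
        (N : ℂ) * (1 / (((N * (k + 1) + j : ℝ) : ℂ) + x * Complex.I)) := by
      have : z + (k + 1) = (((N * (k + 1) + j : ℝ) : ℂ) + x * Complex.I) / N := by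
        rw [hz]; push_cast; field_simp; ring
      rw [this]; simp [div_eq_mul_inv, mul_comm]
    have h₂ : 1 / (z - (k + 1)) =
        (N : ℂ) * (1 / (((-(N * (k + 1) - j) : ℝ) : ℂ) + x * Complex.I)) := by
      have : z - (k + 1) = (((-(N * (k + 1) - j) : ℝ) : ℂ) + x * Complex.I) / N := by
        rw [hz]; push_cast; field_simp; ring
      rw [this]; simp only [div_eq_mul_inv, one_mul, mul_inv, inv_inv, mul_comm]
    rw [Complex.add_re, h₁, h₂, Complex.re_ofReal_mul, Complex.re_ofReal_mul,
      re_one_div_add_mul_I, re_one_div_add_mul_I, neg_sq]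
    ring
  have hsummable : Summable fun k : ℕ => 1 / (z - (k + 1)) + 1 / (z + (k + 1)) :=
    summable_cotTerm hzmem
  have hcot := congrArg Complex.re (cot_series_rep' hzmem)
  rw [Complex.re_tsum hsummable, tsum_congr hterm, tsum_mul_left] at hcot
  have harg : π * z = ((π * j / N : ℝ) : ℂ) + ((π * x / N : ℝ) : ℂ) * Complex.I := by
    rw [hz]; push_cast; ring
  have hsin : Real.sin (π * j / N) ≠ 0 := by
    refine (Real.sin_pos_of_pos_of_lt_pi (by positivity) ?_).ne'
    rw [div_lt_iff₀ hN]
    gcongr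
  have hone : 1 / z = (N : ℂ) * (1 / ((j : ℂ) + x * Complex.I)) := by
    rw [hz]; simp [div_eq_mul_inv, mul_comm]
  rw [Complex.sub_re, harg, Complex.re_ofReal_mul, re_cot_add_mul_I _ _ hsin, hone,
    Complex.re_ofReal_mul, re_one_div_add_mul_I] at hcot
  rw [show 2 * π * j / N = 2 * (π * j / N) by ring, show 2 * π * x / N = 2 * (π * x / N) by ring,
    div_mul_eq_mul_div, eq_div_iff hN.ne']
  linarith

/-- The theta-type series `∑_{n ≡ j mod N} n e^{-c(n² + x²)τ}` over all integers `n`, the terms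
with `n = kN + j` and `n = -kN + j` being paired. -/
noncomputable def thetaSeries (c x N j τ : ℝ) : ℝ :=
  gaussTerm c x j τ + ∑' k : ℕ,
    (gaussTerm c x (N * (k + 1) + j) τ - gaussTerm c x (N * (k + 1) - j) τ)

lemma integrableOn_thetaSeries {c N j : ℝ} (x : ℝ) (hc : 0 < c) (hj : 0 < j) (hjN : j < N) :
    IntegrableOn (thetaSeries c x N j) (Ioi 0) :=
  (integrableOn_gaussTerm x hc hj).add (integrable_tsum_of_summable_integral_norm
    (integrableOn_gaussTerm_sub x hc hj hjN) (summable_integral_norm_gaussTerm_sub x hc hj hjN))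

lemma integral_thetaSeries {c N j x : ℝ} (hx : x ≠ 0) (hc : 0 < c) (hj : 0 < j) (hjN : j < N) :
    ∫ τ in Ioi (0 : ℝ), thetaSeries c x N j τ =
      π / N * (Real.sin (2 * π * j / N) /
        (Real.cosh (2 * π * x / N) - Real.cos (2 * π * j / N))) / c := by
  rw [← add_tsum_eq_cosh_sub_cos hx hj hjN, add_div, ← integral_gaussTerm x hc hj,
    ← integral_tsum_gaussTerm_sub x hc hj hjN]
  exact integral_add (integrableOn_gaussTerm x hc hj) (integrable_tsum_of_summable_integral_norm
    (integrableOn_gaussTerm_sub x hc hj hjN) (summable_integral_norm_gaussTerm_sub x hc hj hjN))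

lemma summable_gaussTerm_nat {c τ : ℝ} (x : ℝ) (hc : 0 < c) (hτ : 0 < τ) :
    Summable fun n : ℕ => gaussTerm c x n τ := by
  refine (summable_pow_mul_exp_neg_nat_mul 1 (mul_pos hc hτ)).of_nonneg_of_le
    (fun n => by unfold gaussTerm; positivity) fun n => ?_
  rw [gaussTerm, pow_one]
  refine mul_le_mul_of_nonneg_left (Real.exp_le_exp.2 ?_) n.cast_nonneg
  have hn : (n : ℝ) ≤ n ^ 2 + x ^ 2 := by
    have : (n : ℝ) ≤ n ^ 2 := by exact_mod_cast Nat.le_self_pow two_ne_zero n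
    linarith [sq_nonneg x]
  have := mul_le_mul_of_nonneg_left hn (mul_pos hc hτ).le
  linarith

lemma thetaSeries_eq_tsum_sub_tsum {c τ : ℝ} (x : ℝ) (hc : 0 < c) (hτ : 0 < τ) {N j : ℕ}
    (hj : 0 < j) (hjN : j < N) :
    thetaSeries c x N j τ = ∑' m : ℕ, gaussTerm c x ((j + N * m : ℕ) : ℝ) τ -
      ∑' m : ℕ, gaussTerm c x ((N - j + N * m : ℕ) : ℝ) τ := by
  have hN : N ≠ 0 := by omega
  have hs (i : ℕ) : Summable fun m : ℕ => gaussTerm c x ((i + N * m : ℕ) : ℝ) τ :=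
    (summable_gaussTerm_nat x hc hτ).comp_injective fun a b hab => by
      simpa [hN] using hab
  rw [(hs j).tsum_eq_zero_add, add_sub_assoc,
    ← Summable.tsum_sub ((summable_nat_add_iff 1).2 (hs j)) (hs (N - j)), thetaSeries]
  congr 1
  refine tsum_congr fun k => ?_
  push_cast [Nat.cast_sub hjN.le]
  ring_nf

lemma sin_coeff_add_six_mul (r m : ℕ) :
    (-1 : ℝ) ^ (r + 6 * m + 1) * Real.sin (2 * π * ((r + 6 * m : ℕ) : ℝ) / 3) =
      (-1) ^ (r + 1) * Real.sin (2 * π * r / 3) := by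
  have hsign : (-1 : ℝ) ^ (r + 6 * m + 1) = (-1) ^ (r + 1) := by
    rw [show r + 6 * m + 1 = r + 1 + 2 * (3 * m) by ring, pow_add, pow_mul]
    simp
  have harg : 2 * π * ((r + 6 * m : ℕ) : ℝ) / 3 = 2 * π * r / 3 + (2 * m : ℕ) * (2 * π) := by
    push_cast; ring
  rw [hsign, harg, Real.sin_add_nat_mul_two_pi]

lemma exp_mul_f_eq_thetaSeries (x : ℝ) {τ : ℝ} (hτ : 0 < τ) :
    Real.exp (-(2 * π / 3) * τ * x ^ 2) * f τ = √3 / 2 *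
      (thetaSeries (2 * π / 3) x 6 1 τ + thetaSeries (2 * π / 3) x 6 2 τ) := by
  have hc : 0 < 2 * π / 3 := by positivity
  set c := 2 * π / 3
  have hterm (n : ℕ) : Real.exp (-c * τ * x ^ 2) * ((-1 : ℝ) ^ (n + 1) * n *
      Real.sin (2 * π * n / 3) * Real.exp (-c * n ^ 2 * τ)) =
      (-1 : ℝ) ^ (n + 1) * Real.sin (2 * π * n / 3) * gaussTerm c x n τ := by
    rw [gaussTerm, show -(c * ((n : ℝ) ^ 2 + x ^ 2)) * τ = -c * τ * x ^ 2 + -c * n ^ 2 * τ by ring,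
      Real.exp_add]
    ring
  have hsummable : Summable fun n : ℕ =>
      (-1 : ℝ) ^ (n + 1) * Real.sin (2 * π * n / 3) * gaussTerm c x n τ := by
    refine (summable_gaussTerm_nat x hc hτ).of_norm_bounded fun n => ?_
    have hpos : 0 ≤ gaussTerm c x n τ := by unfold gaussTerm; positivity
    rw [norm_mul, norm_mul, norm_pow, norm_neg, norm_one, one_pow, one_mul, Real.norm_of_nonneg hpos]
    exact mul_le_of_le_one_left hpos (Real.abs_sin_le_one _)
  have h₁ : Real.sin (2 * π * (1 : ℕ) / 3) = √3 / 2 := by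
    rw [show 2 * π * ((1 : ℕ) : ℝ) / 3 = π - π / 3 by push_cast; ring, Real.sin_pi_sub,
      Real.sin_pi_div_three]
  have h₂ : Real.sin (2 * π * (2 : ℕ) / 3) = -(√3 / 2) := by
    rw [show 2 * π * ((2 : ℕ) : ℝ) / 3 = π / 3 + π by push_cast; ring, Real.sin_add_pi,
      Real.sin_pi_div_three]
  have h₃ : Real.sin (2 * π * (3 : ℕ) / 3) = 0 := by
    rw [show 2 * π * ((3 : ℕ) : ℝ) / 3 = 2 * π by push_cast; ring, Real.sin_two_pi]
  have h₄ : Real.sin (2 * π * (4 : ℕ) / 3) = √3 / 2 := by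
    rw [← h₁, show 2 * π * ((4 : ℕ) : ℝ) / 3 = 2 * π * (1 : ℕ) / 3 + 2 * π by push_cast; ring,
      Real.sin_add_two_pi]
  have h₅ : Real.sin (2 * π * (5 : ℕ) / 3) = -(√3 / 2) := by
    rw [← h₂, show 2 * π * ((5 : ℕ) : ℝ) / 3 = 2 * π * (2 : ℕ) / 3 + 2 * π by push_cast; ring,
      Real.sin_add_two_pi]
  have hθ₁ := thetaSeries_eq_tsum_sub_tsum x hc hτ (N := 6) (j := 1) (by norm_num) (by norm_num)
  have hθ₂ := thetaSeries_eq_tsum_sub_tsum x hc hτ (N := 6) (j := 2) (by norm_num) (by norm_num)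
  rw [f, ← tsum_mul_left, tsum_congr hterm, Nat.sumByResidueClasses hsummable 6]
  simp only [sin_coeff_add_six_mul, tsum_mul_left]
  have huniv (g : ℕ → ℝ) : ∑ r : ZMod 6, g r.val = g 0 + g 1 + g 2 + g 3 + g 4 + g 5 :=
    Fin.sum_univ_six fun r : Fin 6 => g r
  rw [huniv fun r => (-1) ^ (r + 1) * Real.sin (2 * π * r / 3) *
    ∑' m : ℕ, gaussTerm c x ((r + 6 * m : ℕ) : ℝ) τ, h₁, h₂, h₃, h₄, h₅]
  norm_num at hθ₁ hθ₂ ⊢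
  rw [hθ₁, hθ₂]
  ring

lemma sinh_two_mul_div_sinh_three_mul {y : ℝ} (hy : y ≠ 0) :
    Real.sinh (2 * y) / Real.sinh (3 * y) =
      (1 / (Real.cosh y - 1 / 2) + 1 / (Real.cosh y + 1 / 2)) / 4 := by
  have hsinh : Real.sinh y ≠ 0 := Real.sinh_ne_zero.2 hy
  have hcosh := Real.one_le_cosh y
  have h₁ : Real.cosh y - 1 / 2 ≠ 0 := by linarith
  have h₂ : Real.cosh y + 1 / 2 ≠ 0 := by linarith
  have h₃ : Real.sinh (3 * y) = 4 * Real.sinh y * (Real.cosh y - 1 / 2) * (Real.cosh y + 1 / 2) := by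
    rw [Real.sinh_three_mul]
    linear_combination -4 * Real.sinh y * Real.cosh_sq y
  rw [h₃, Real.sinh_two_mul, div_add_div _ _ h₁ h₂, div_div, div_eq_div_iff (by positivity)
    (by positivity)]
  ring

/-- Laplace transform of `f`: for every real `x ≠ 0`, the function
`τ ↦ e^{−(2π/3) τ x²} f(τ)` is integrable on `(0,∞)` and
`∫₀^∞ e^{−(2π/3) τ x²} f(τ) dτ = (3/4) sinh(2πx/3)/sinh(πx)`. -/
theorem laplace_transform_f (x : ℝ) (hx : x ≠ 0) :
    IntegrableOn (fun τ : ℝ => Real.exp (-(2 * π / 3) * τ * x ^ 2) * f τ) (Ioi 0)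
    ∧ ∫ τ in Ioi (0 : ℝ), Real.exp (-(2 * π / 3) * τ * x ^ 2) * f τ
        = 3 / 4 * Real.sinh (2 * π * x / 3) / Real.sinh (π * x) := by
  have hc : 0 < 2 * π / 3 := by positivity
  have hθ₁ := integrableOn_thetaSeries x hc (N := 6) (j := 1) (by norm_num) (by norm_num)
  have hθ₂ := integrableOn_thetaSeries x hc (N := 6) (j := 2) (by norm_num) (by norm_num)
  have heq : EqOn (fun τ : ℝ => Real.exp (-(2 * π / 3) * τ * x ^ 2) * f τ)
      (fun τ => √3 / 2 *
        (thetaSeries (2 * π / 3) x 6 1 τ + thetaSeries (2 * π / 3) x 6 2 τ)) (Ioi 0) :=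
    fun τ hτ => exp_mul_f_eq_thetaSeries x hτ
  refine ⟨(integrableOn_congr_fun heq measurableSet_Ioi).2 ((hθ₁.add hθ₂).const_mul _), ?_⟩
  rw [setIntegral_congr_fun measurableSet_Ioi heq, integral_const_mul, integral_add hθ₁ hθ₂,
    integral_thetaSeries hx hc (by norm_num) (by norm_num),
    integral_thetaSeries hx hc (by norm_num) (by norm_num)]
  have hsin₂ : Real.sin (2 * π * 2 / 6) = √3 / 2 := by
    rw [show 2 * π * 2 / 6 = π - π / 3 by ring, Real.sin_pi_sub, Real.sin_pi_div_three]
  have hcos₂ : Real.cos (2 * π * 2 / 6) = -(1 / 2) := by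
    rw [show 2 * π * 2 / 6 = π - π / 3 by ring, Real.cos_pi_sub, Real.cos_pi_div_three]
  have hy : π * x / 3 ≠ 0 := by positivity
  rw [show 2 * π * 1 / 6 = π / 3 by ring, show 2 * π * x / 6 = π * x / 3 by ring, hsin₂, hcos₂,
    Real.sin_pi_div_three, Real.cos_pi_div_three, mul_div_assoc (3 / 4 : ℝ),
    show 2 * π * x / 3 = 2 * (π * x / 3) by ring, show π * x = 3 * (π * x / 3) by ring,
    mul_div_cancel_left₀ (π * x / 3) three_ne_zero, sinh_two_mul_div_sinh_three_mul hy, sub_neg_eq_add]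
  have hsqrt : √3 * √3 = (3 : ℝ) := Real.mul_self_sqrt (by norm_num)
  set A := Real.cosh (π * x / 3) - 1 / 2
  set B := Real.cosh (π * x / 3) + 1 / 2
  calc _ = √3 * √3 * (π / 6 / (2 * π / 3)) / 4 * (1 / A + 1 / B) := by ring
    _ = _ := by rw [hsqrt]; field_simp; ring
end

section
/- For every θ ∈ (−π, π) and every real x ≠ 0, the series Σ_{n=1}^∞ (−1)^{n−1} n sin(nθ) / (n² + x²) converges and equals (π/2) · sinh(xθ) / sinh(πx). -/
open Real Filter Set
open scoped Topology FourierTransform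
open MeasureTheory

/-- **Riemann–Lebesgue lemma** for sines with a fixed shift on a compact interval. -/
lemma tendsto_integral_mul_sin_atTop {a b : ℝ} (hab : a ≤ b) (g : ℝ → ℝ) (c : ℝ)
    (hg : IntervalIntegrable g volume a b) :
    Tendsto (fun w : ℝ => ∫ t in a..b, g t * Real.sin (w * (t - c))) atTop (𝓝 0) := by
  set f : ℝ → ℂ := (Ioc a b).indicator fun t => (g t : ℂ) with hf
  have hlim := (Real.tendsto_integral_exp_smul_cocompact f).norm
  rw [norm_zero] at hlim
  have hw : Tendsto (fun w : ℝ => -w / (2 * π)) atTop (cocompact ℝ) :=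
    ((tendsto_neg_atTop_atBot (G := ℝ)).atBot_div_const (by positivity)).mono_right atBot_le_cocompact
  refine squeeze_zero_norm (fun w => ?_) (hlim.comp hw)
  have hgc : IntervalIntegrable (fun t => (g t : ℂ)) volume a b :=
    ⟨hg.1.ofReal, hg.2.ofReal⟩
  have hexp (t : ℝ) : Complex.exp ((-(w * c) : ℝ) * Complex.I) *
      ((𝐞 (-(t * (-w / (2 * π)))) : ℂ) * (g t : ℂ)) =
      Complex.exp ((w * (t - c) : ℝ) * Complex.I) * (g t : ℂ) := by
    rw [Real.fourierChar_apply, ← mul_assoc, ← Complex.exp_add]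
    congr 2
    push_cast
    field_simp
    ring
  have hJ : (∫ v, 𝐞 (-(v * (-w / (2 * π)))) • f v) =
      ∫ t in a..b, (𝐞 (-(t * (-w / (2 * π)))) : ℂ) * (g t : ℂ) := by
    rw [intervalIntegral.integral_of_le hab, ← integral_indicator measurableSet_Ioc]
    congr 1 with t
    by_cases ht : t ∈ Ioc a b <;> simp [hf, ht, Circle.smul_def]
  have him : (∫ t in a..b, g t * Real.sin (w * (t - c))) =
      (Complex.exp ((-(w * c) : ℝ) * Complex.I) *
        ∫ v, 𝐞 (-(v * (-w / (2 * π)))) • f v).im := by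
    rw [hJ, ← intervalIntegral.integral_const_mul]
    simp_rw [hexp]
    have hint : IntervalIntegrable
        (fun t : ℝ => Complex.exp ((w * (t - c) : ℝ) * Complex.I) * (g t : ℂ)) volume a b :=
      hgc.continuousOn_mul (by fun_prop)
    rw [← Complex.imCLM_apply, ← Complex.imCLM.intervalIntegral_comp_comm hint]
    refine intervalIntegral.integral_congr fun t _ => ?_
    simp only [Complex.imCLM_apply, Complex.im_mul_ofReal, Complex.exp_ofReal_mul_I_im]
    ring
  rw [him, Real.norm_eq_abs]
  refine (Complex.abs_im_le_norm _).trans_eq ?_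
  rw [norm_mul, Complex.norm_exp_ofReal_mul_I, one_mul]
  rfl

/-- Closed form of the Dirichlet kernel, in product form. -/
lemma two_mul_sin_half_mul_sum_cos (u : ℝ) (N : ℕ) :
    2 * Real.sin (u / 2) * (∑ n ∈ Finset.range N, Real.cos (n * u) - 1 / 2) =
      Real.sin ((N - 1 / 2) * u) := by
  induction N with
  | zero =>
    rw [show ((0 : ℕ) - 1 / 2 : ℝ) * u = -(u / 2) by push_cast; ring, Real.sin_neg]
    simp
    ring
  | succ N ih =>
    rw [Finset.sum_range_succ, add_sub_right_comm, mul_add, ih,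
      show ((N : ℝ) - 1 / 2) * u = N * u - u / 2 by ring,
      show (((N + 1 : ℕ) : ℝ) - 1 / 2) * u = N * u + u / 2 by push_cast; ring,
      Real.sin_sub, Real.sin_add]
    ring

lemma integral_sinh_mul_cos (x θ : ℝ) (hx : x ≠ 0) (n : ℕ) :
    ∫ t in (-π)..π, Real.sinh (x * t) * Real.cos (n * (t - θ)) =
      2 * Real.sinh (π * x) *
        ((-1 : ℝ) ^ (n + 1) * n * Real.sin (n * θ) / (n ^ 2 + x ^ 2)) := by
  have hne : (n : ℝ) ^ 2 + x ^ 2 ≠ 0 := by positivity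
  have hderiv (t : ℝ) : HasDerivAt (fun t : ℝ =>
      (x * (Real.cosh (x * t) * Real.cos (n * (t - θ))) +
        n * (Real.sinh (x * t) * Real.sin (n * (t - θ)))) / (n ^ 2 + x ^ 2))
      (Real.sinh (x * t) * Real.cos (n * (t - θ))) t := by
    have h1 : HasDerivAt (fun t : ℝ => x * t) x t := by
      simpa using (hasDerivAt_id t).const_mul x
    have h2 : HasDerivAt (fun t : ℝ => n * (t - θ)) n t := by
      simpa using ((hasDerivAt_id t).sub_const θ).const_mul (n : ℝ)
    have := (((h1.cosh.mul h2.cos).const_mul x).add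
      ((h1.sinh.mul h2.sin).const_mul (n : ℝ))).div_const ((n : ℝ) ^ 2 + x ^ 2)
    refine this.congr_deriv ?_
    field_simp
    ring
  rw [intervalIntegral.integral_eq_sub_of_hasDerivAt (fun t _ => hderiv t)
    (Continuous.intervalIntegrable (by fun_prop) _ _)]
  rw [show (n : ℝ) * (π - θ) = n * π - n * θ by ring,
    show (n : ℝ) * (-π - θ) = -(n * π + n * θ) by ring,
    show x * -π = -(π * x) by ring, show x * π = π * x by ring]
  simp only [Real.cosh_neg, Real.sinh_neg, Real.cos_neg, Real.sin_neg, Real.cos_sub,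
    Real.sin_sub, Real.cos_add, Real.sin_add, Real.sin_nat_mul_pi, Real.cos_nat_mul_pi]
  field_simp
  ring

lemma integral_cos_nat_succ_mul_sub (θ : ℝ) (n : ℕ) :
    ∫ t in (-π)..π, Real.cos ((n + 1 : ℕ) * (t - θ)) = 0 := by
  have hne : ((n + 1 : ℕ) : ℝ) ≠ 0 := by positivity
  set m := n + 1
  have hderiv (t : ℝ) : HasDerivAt (fun t : ℝ => Real.sin (m * (t - θ)) / m)
      (Real.cos (m * (t - θ))) t := by
    have h2 : HasDerivAt (fun t : ℝ => m * (t - θ)) m t := by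
      simpa using ((hasDerivAt_id t).sub_const θ).const_mul (m : ℝ)
    refine (h2.sin.div_const (m : ℝ)).congr_deriv ?_
    field_simp
  rw [intervalIntegral.integral_eq_sub_of_hasDerivAt (fun t _ => hderiv t)
    (Continuous.intervalIntegrable (by fun_prop) _ _),
    show (m : ℝ) * (π - θ) = m * π - m * θ by ring,
    show (m : ℝ) * (-π - θ) = -(m * π + m * θ) by ring]
  simp only [Real.sin_neg, Real.sin_sub, Real.sin_add, Real.sin_nat_mul_pi]
  ring

lemma integral_sum_cos_sub_half (θ : ℝ) (N : ℕ) :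
    ∫ t in (-π)..π, (∑ n ∈ Finset.range (N + 1), Real.cos (n * (t - θ)) - 1 / 2) = π := by
  rw [intervalIntegral.integral_sub (Continuous.intervalIntegrable (by fun_prop) _ _)
      (by simp), intervalIntegral.integral_finsetSum
      (fun n _ => Continuous.intervalIntegrable (by fun_prop) _ _),
    Finset.sum_range_succ', Finset.sum_eq_zero fun n _ => integral_cos_nat_succ_mul_sub θ n]
  simp
  ring

lemma integral_sinh_mul_sum_cos_sub_half (x θ : ℝ) (hx : x ≠ 0) (N : ℕ) :
    ∫ t in (-π)..π, Real.sinh (x * t) *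
        (∑ n ∈ Finset.range N, Real.cos (n * (t - θ)) - 1 / 2) =
      2 * Real.sinh (π * x) * ∑ n ∈ Finset.range N,
        (-1 : ℝ) ^ (n + 1) * n * Real.sin (n * θ) / (n ^ 2 + x ^ 2) := by
  have h0 : ∫ t in (-π)..π, Real.sinh (x * t) = 0 := by
    simpa using integral_sinh_mul_cos x θ hx 0
  simp_rw [mul_sub (Real.sinh _), Finset.mul_sum]
  rw [intervalIntegral.integral_sub (Continuous.intervalIntegrable (by fun_prop) _ _)
      (Continuous.intervalIntegrable (by fun_prop) _ _), intervalIntegral.integral_finsetSum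
      (fun n _ => Continuous.intervalIntegrable (by fun_prop) _ _),
    intervalIntegral.integral_mul_const, h0]
  simp_rw [integral_sinh_mul_cos x θ hx]
  simp

/-- The difference quotient of `t ↦ sinh (x t)` against `2 sin ((t - θ) / 2)` extends
continuously across `t = θ`. -/
lemma exists_continuousOn_mul_sin_half_eq (θ : ℝ) (hθ : θ ∈ Ioo (-π) π) (x : ℝ) :
    ∃ g : ℝ → ℝ, ContinuousOn g (Icc (-π) π) ∧ ∀ t ∈ Icc (-π) π,
      Real.sinh (x * t) - Real.sinh (x * θ) = g t * (2 * Real.sin ((t - θ) / 2)) := by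
  set p : ℝ → ℝ := fun t => Real.sinh (x * t)
  set q : ℝ → ℝ := fun t => 2 * Real.sin ((t - θ) / 2) with hq
  have hqθ : q θ = 0 := by simp [hq]
  have hqd : HasDerivAt q 1 θ := by
    have h : HasDerivAt (fun t : ℝ => (t - θ) / 2) (1 / 2) θ :=
      ((hasDerivAt_id θ).sub_const θ).div_const 2
    refine (h.sin.const_mul 2).congr_deriv ?_
    simp
  have hp : Continuous (dslope p θ) := continuous_iff_continuousAt.2 fun t => by
    rcases eq_or_ne t θ with rfl | h
    · exact continuousAt_dslope_same.2 (by fun_prop)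
    · exact (continuousAt_dslope_of_ne h).2 (by fun_prop)
  have hqc : Continuous (dslope q θ) := continuous_iff_continuousAt.2 fun t => by
    rcases eq_or_ne t θ with rfl | h
    · exact continuousAt_dslope_same.2 hqd.differentiableAt
    · exact (continuousAt_dslope_of_ne h).2 (by fun_prop)
  have hsub (t : ℝ) : (t - θ) * dslope q θ t = q t := by
    simpa [hqθ] using sub_smul_dslope q θ t
  have hne : ∀ t ∈ Icc (-π) π, dslope q θ t ≠ 0 := by
    intro t ht h0
    rcases eq_or_ne t θ with rfl | h
    · rw [dslope_same, hqd.deriv] at h0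
      exact one_ne_zero h0
    · have hz : Real.sin ((t - θ) / 2) = 0 := by
        have := hsub t
        rw [h0] at this
        simpa [hq] using this.symm
      rw [Real.sin_eq_zero_iff_of_lt_of_lt (by linarith [ht.1, hθ.2])
        (by linarith [ht.2, hθ.1])] at hz
      exact h (by linarith)
  refine ⟨fun t => dslope p θ t / dslope q θ t, hp.continuousOn.div hqc.continuousOn hne,
    fun t ht => ?_⟩
  have h1 : (t - θ) * dslope p θ t = p t - p θ := sub_smul_dslope p θ t
  change p t - p θ = dslope p θ t / dslope q θ t * q t
  rw [← h1, ← hsub t]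
  field_simp [hne t ht]

/-- The classical summation formula (Gradshteyn–Ryzhik 1.445.4): for every `θ ∈ (−π, π)` and
every real `x ≠ 0`, the series `Σ_{n=1}^∞ (−1)^{n−1} n sin(nθ)/(n² + x²)` converges (in the
sense of partial sums) and equals `(π/2) sinh(xθ)/sinh(πx)`. The `n = 0` term vanishes, and
for `n ≥ 1` one has `(−1)^{n+1} = (−1)^{n−1}`. -/
theorem sum_alternating_sin_div (θ : ℝ) (hθ : θ ∈ Ioo (-π) π) (x : ℝ) (hx : x ≠ 0) :
    Tendsto (fun N : ℕ =>
        ∑ n ∈ Finset.range N, (-1 : ℝ) ^ (n + 1) * n * Real.sin (n * θ) / (n ^ 2 + x ^ 2))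
      atTop (nhds (π / 2 * Real.sinh (x * θ) / Real.sinh (π * x))) := by
  rw [← tendsto_add_atTop_iff_nat 1]
  have hπ : -π ≤ π := by linarith [Real.pi_pos]
  have hs : Real.sinh (π * x) ≠ 0 := by
    rw [Ne, Real.sinh_eq_zero]
    exact mul_ne_zero Real.pi_ne_zero hx
  obtain ⟨g, hgc, hg⟩ := exists_continuousOn_mul_sin_half_eq θ hθ x
  have hRL := tendsto_integral_mul_sin_atTop hπ g θ
    (ContinuousOn.intervalIntegrable (by rwa [uIcc_of_le hπ]))
  have hN : Tendsto (fun N : ℕ => ((N + 1 : ℕ) : ℝ) - 1 / 2) atTop atTop :=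
    tendsto_atTop_add_const_right _ _
      (tendsto_natCast_atTop_atTop.comp (tendsto_add_atTop_nat 1))
  have key (N : ℕ) : ∑ n ∈ Finset.range (N + 1),
        (-1 : ℝ) ^ (n + 1) * n * Real.sin (n * θ) / (n ^ 2 + x ^ 2) =
      (π * Real.sinh (x * θ) +
        ∫ t in (-π)..π, g t * Real.sin ((((N + 1 : ℕ) : ℝ) - 1 / 2) * (t - θ))) /
        (2 * Real.sinh (π * x)) := by
    have hint : ∫ t in (-π)..π, g t * Real.sin ((((N + 1 : ℕ) : ℝ) - 1 / 2) * (t - θ)) =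
        ∫ t in (-π)..π, (Real.sinh (x * t) *
            (∑ n ∈ Finset.range (N + 1), Real.cos (n * (t - θ)) - 1 / 2) -
          Real.sinh (x * θ) *
            (∑ n ∈ Finset.range (N + 1), Real.cos (n * (t - θ)) - 1 / 2)) := by
      refine intervalIntegral.integral_congr fun t ht => ?_
      rw [uIcc_of_le hπ] at ht
      rw [← sub_mul, hg t ht, mul_assoc (g t), two_mul_sin_half_mul_sum_cos]
    rw [hint, intervalIntegral.integral_sub
      (Continuous.intervalIntegrable (by fun_prop) _ _)
      (Continuous.intervalIntegrable (by fun_prop) _ _),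
      integral_sinh_mul_sum_cos_sub_half x θ hx, intervalIntegral.integral_const_mul,
      integral_sum_cos_sub_half, eq_div_iff (mul_ne_zero two_ne_zero hs)]
    ring
  simp_rw [key]
  have hlim := ((hRL.comp hN).const_add (π * Real.sinh (x * θ))).div_const
    (2 * Real.sinh (π * x))
  rwa [add_zero, mul_div_mul_comm, ← mul_div_assoc] at hlim
end
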